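/- arXiv:1609.08066 — 2 statements merged into one kernel-verified Lean document; each statement's English description precedes it below -/
import Mathlib

section
/- Let n ≥ 2 and let γₙ be the probability measure on ℝⁿ given by the product of n copies of the standard Gaussian measure N(0,1). Then the expectation of the maximum absolute coordinate satisfies ∫ max_{1 ≤ j ≤ n} |g_j| dγₙ(g) ≤ √(2 log n). -/
open MeasureTheory ProbabilityTheory

noncomputable def phi (x : ℝ) : ℝ := Real.exp (-(x ^ 2 / 2))

noncomputable def W (t : ℝ) : ℝ := ∫ x in Set.Ioi t, phi x

lemma phi_pos (x : ℝ) : 0 < phi x := Real.exp_pos _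

lemma phi_cont : Continuous phi := by unfold phi; fun_prop

lemma phi_eq (x : ℝ) : phi x = Real.exp (-(1/2) * x ^ 2) := by
  unfold phi; congr 1; ring

lemma phi_int : Integrable phi := by
  have := integrable_exp_neg_mul_sq (b := 1/2) (by norm_num)
  exact this.congr (by filter_upwards with x; rw [phi_eq])

lemma xphi_int : Integrable (fun x => x * phi x) := by
  have := integrable_mul_exp_neg_mul_sq (b := 1/2) (by norm_num)
  exact this.congr (by filter_upwards with x; rw [phi_eq])

lemma xxphi_int : Integrable (fun x => x ^ 2 * phi x) := by
  have := integrable_rpow_mul_exp_neg_mul_sq (b := 1/2) (by norm_num) (s := 2) (by norm_num)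
  exact this.congr (by filter_upwards with x; rw [phi_eq]; norm_cast)

lemma phi_deriv (x : ℝ) : HasDerivAt phi (-(x * phi x)) x := by
  have h : HasDerivAt (fun x : ℝ => -(x ^ 2 / 2)) (-x) x := by
    have := ((hasDerivAt_pow 2 x).div_const 2).neg
    exact this.congr_deriv (by push_cast; ring)
  have := h.exp
  exact this.congr_deriv (by unfold phi; ring)

lemma int_xphi (t : ℝ) : ∫ x in Set.Ioi t, x * phi x = phi t := by
  have hd : ∀ x ∈ Set.Ici t, HasDerivAt (fun x => - phi x) (x * phi x) x := by
    intro x _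
    exact (phi_deriv x).neg.congr_deriv (by ring)
  have h0 := tendsto_zero_of_hasDerivAt_of_integrableOn_Ioi (a := t)
    (fun x hx => hd x (Set.mem_Ici.2 (le_of_lt hx))) xphi_int.integrableOn phi_int.neg.integrableOn
  have := integral_Ioi_of_hasDerivAt_of_tendsto' hd xphi_int.integrableOn h0
  rw [this]; ring

lemma int_xxphi (t : ℝ) : ∫ x in Set.Ioi t, x ^ 2 * phi x = t * phi t + W t := by
  have hd : ∀ x ∈ Set.Ici t, HasDerivAt (fun x => - (x * phi x)) (x ^ 2 * phi x - phi x) x := by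
    intro x _
    have := ((hasDerivAt_id x).mul (phi_deriv x)).neg
    exact this.congr_deriv (by simp only [id]; ring)
  have hi : Integrable (fun x => x ^ 2 * phi x - phi x) := xxphi_int.sub phi_int
  have h0 := tendsto_zero_of_hasDerivAt_of_integrableOn_Ioi (a := t)
    (fun x hx => hd x (Set.mem_Ici.2 (le_of_lt hx))) hi.integrableOn xphi_int.neg.integrableOn
  have := integral_Ioi_of_hasDerivAt_of_tendsto' hd hi.integrableOn h0
  rw [integral_sub xxphi_int.integrableOn phi_int.integrableOn] at this
  unfold W
  linarith

lemma W_pos (t : ℝ) : 0 < W t := by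
  unfold W
  rw [setIntegral_pos_iff_support_of_nonneg_ae]
  · have : Function.support phi = Set.univ := by
      ext x; simp [(phi_pos x).ne']
    simp [this]
  · filter_upwards with x using (phi_pos x).le
  · exact phi_int.integrableOn

lemma phi_sq_le (t : ℝ) : phi t ^ 2 ≤ W t * (W t + t * phi t) := by
  have hW := W_pos t
  have key : 0 ≤ ∫ x in Set.Ioi t, (W t * x - phi t) ^ 2 * phi x :=
    integral_nonneg fun x => mul_nonneg (sq_nonneg _) (phi_pos x).le
  have e : ∫ x in Set.Ioi t, (W t * x - phi t) ^ 2 * phi x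
      = W t ^ 2 * (t * phi t + W t) - 2 * W t * phi t * phi t + phi t ^ 2 * W t := by
    have : ∀ x, (W t * x - phi t) ^ 2 * phi x = W t ^ 2 * (x ^ 2 * phi x)
        - 2 * W t * phi t * (x * phi x) + phi t ^ 2 * phi x := fun x => by ring
    simp_rw [this]
    rw [integral_add, integral_sub, integral_const_mul, integral_const_mul, integral_const_mul,
      int_xphi, int_xxphi]
    · rfl
    · exact (xxphi_int.const_mul _).integrableOn
    · exact (xphi_int.const_mul _).integrableOn
    · exact ((xxphi_int.const_mul _).sub (xphi_int.const_mul _)).integrableOn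
    · exact (phi_int.const_mul _).integrableOn
  rw [e] at key
  have : 0 ≤ W t * (W t * (W t + t * phi t) - phi t ^ 2) := by linarith
  have := nonneg_of_mul_nonneg_right this hW
  linarith

lemma W_eq (t : ℝ) : W t = W 0 - ∫ x in (0:ℝ)..t, phi x := by
  have := intervalIntegral.integral_Ioi_sub_Ioi' (a := 0) (b := t) phi_int.integrableOn phi_int.integrableOn
  unfold W
  linarith

lemma W_deriv (t : ℝ) : HasDerivAt W (- phi t) t := by
  have h : HasDerivAt (fun t => W 0 - ∫ x in (0:ℝ)..t, phi x) (- phi t) t :=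
    (intervalIntegral.integral_hasDerivAt_right (phi_cont.intervalIntegrable _ _)
      (phi_cont.stronglyMeasurableAtFilter _ _) phi_cont.continuousAt).const_sub _
  convert h using 1
  ext t; exact W_eq t

lemma W_zero : W 0 = Real.sqrt (2 * Real.pi) / 2 := by
  have := integral_gaussian_Ioi (1/2)
  unfold W
  simp_rw [phi_eq]
  rw [this]; congr 2; ring

lemma W_tendsto : Filter.Tendsto W Filter.atTop (nhds 0) := by
  have := intervalIntegral_tendsto_integral_Ioi 0 phi_int.integrableOn Filter.tendsto_id
  have := this.const_sub (W 0)
  simp only [id] at this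
  rw [show W 0 - ∫ x in Set.Ioi 0, phi x = 0 from sub_self _] at this
  refine this.congr fun t => (W_eq t).symm

noncomputable def Dfun (t : ℝ) : ℝ :=
  - 2 * Real.log (2 * W t / Real.sqrt (2 * Real.pi)) - (phi t / W t) ^ 2

lemma D_mono : Monotone Dfun := by
  have hc : 0 < Real.sqrt (2 * Real.pi) := by positivity
  have hd : ∀ t, HasDerivAt Dfun (2 * (phi t / W t ^ 3) * (W t * (W t + t * phi t) - phi t ^ 2)) t := by
    intro t
    have hW := W_pos t
    have h1 := (((W_deriv t).const_mul 2).div_const (Real.sqrt (2 * Real.pi))).log (by positivity)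
    have h2 := ((phi_deriv t).div (W_deriv t) hW.ne').pow 2
    have := (h1.const_mul (-2)).sub h2
    refine this.congr_deriv ?_
    simp only [Pi.div_apply]
    rw [show (2 - 1 : ℕ) = 1 from rfl, pow_one]
    field_simp
    ring
  refine monotone_of_hasDerivAt_nonneg hd fun t => ?_
  have := W_pos t
  have := phi_pos t
  have := phi_sq_le t
  have : 0 ≤ (W t * (W t + t * phi t) - phi t ^ 2) := by linarith
  simp only [Pi.zero_apply]
  positivity

lemma phi_bd (x : ℝ) (h0 : 0 ≤ x) (h1 : x ≤ 57/50) :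
    |phi x - (1 - x^2/2 + x^4/8 - x^6/48 + x^8/384 - x^10/3840)| ≤ x^12 * (7/276480) := by
  have hx : |-(x^2/2)| ≤ 1 := by
    rw [abs_neg, abs_of_nonneg (by positivity)]; nlinarith
  have := Real.exp_bound hx (n := 6) (by norm_num)
  rw [abs_neg (x^2/2), abs_of_nonneg (by positivity : 0 ≤ x^2/2)] at this
  simp only [Finset.sum_range_succ, Finset.sum_range_zero] at this
  norm_num [Nat.factorial] at this
  unfold phi
  convert this using 1
  · congr 1; ring
  · ring

lemma int_poly (c t : ℝ) : ∫ x in (0:ℝ)..t,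
    (1 - x^2/2 + x^4/8 - x^6/48 + x^8/384 - x^10/3840 + x^12 * c) =
    t - t^3/6 + t^5/40 - t^7/336 + t^9/3456 - t^11/42240 + t^13/13 * c := by
  have hd : ∀ x ∈ Set.uIcc 0 t, HasDerivAt (fun t : ℝ => t - t^3/6 + t^5/40 - t^7/336 + t^9/3456 - t^11/42240 + t^13/13 * c)
    (1 - x^2/2 + x^4/8 - x^6/48 + x^8/384 - x^10/3840 + x^12 * c) x := by
    intro x _
    have := ((((((hasDerivAt_id x).sub ((hasDerivAt_pow 3 x).div_const 6)).add
      ((hasDerivAt_pow 5 x).div_const 40)).sub ((hasDerivAt_pow 7 x).div_const 336)).add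
      ((hasDerivAt_pow 9 x).div_const 3456)).sub ((hasDerivAt_pow 11 x).div_const 42240)).add
      (((hasDerivAt_pow 13 x).div_const 13).mul_const c)
    exact this.congr_deriv (by push_cast; ring)
  rw [intervalIntegral.integral_eq_sub_of_hasDerivAt hd
    (Continuous.intervalIntegrable (by fun_prop) _ _)]
  ring

lemma sqrt_lo : 2.5066 ≤ Real.sqrt (2 * Real.pi) :=
  Real.le_sqrt_of_sq_le (by have := Real.pi_gt_d6; norm_num at *; linarith)

lemma sqrt_hi : Real.sqrt (2 * Real.pi) ≤ 2.5067 :=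
  Real.sqrt_le_iff.2 ⟨by norm_num, by have := Real.pi_lt_d6; norm_num at *; linarith⟩

lemma W_lo : 0.3186 ≤ W (57/50) := by
  have h : ∫ x in (0:ℝ)..(57/50), phi x ≤ ∫ x in (0:ℝ)..(57/50),
    (1 - x^2/2 + x^4/8 - x^6/48 + x^8/384 - x^10/3840 + x^12 * (7/276480)) := by
    apply intervalIntegral.integral_mono_on (by norm_num) (phi_cont.intervalIntegrable _ _)
      (Continuous.intervalIntegrable (by fun_prop) _ _)
    intro x hx
    have := (abs_le.1 (phi_bd x hx.1 hx.2)).2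
    linarith
  rw [int_poly] at h
  have := sqrt_lo
  rw [W_eq, W_zero]
  norm_num at *
  linarith

lemma W_hi : W (57/50) ≤ 0.3188 := by
  have h : ∫ x in (0:ℝ)..(57/50),
    (1 - x^2/2 + x^4/8 - x^6/48 + x^8/384 - x^10/3840 + x^12 * (-(7/276480))) ≤ ∫ x in (0:ℝ)..(57/50), phi x := by
    apply intervalIntegral.integral_mono_on (by norm_num) 
      (Continuous.intervalIntegrable (by fun_prop) _ _) (phi_cont.intervalIntegrable _ _)
    intro x hx
    have := (abs_le.1 (phi_bd x hx.1 hx.2)).1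
    linarith
  rw [int_poly] at h
  have := sqrt_hi
  rw [W_eq, W_zero]
  norm_num at *
  linarith

lemma D_t0 : 0 ≤ Dfun (57/50) := by
  have hW := W_pos (57/50)
  have h1 : phi (57/50) ^ 2 ≤ 0.2730 := by
    unfold phi
    rw [← Real.exp_nat_mul]
    have := Real.sum_le_exp_of_nonneg (x := 3249/2500) (by norm_num) 8
    simp only [Finset.sum_range_succ, Finset.sum_range_zero] at this
    norm_num [Nat.factorial] at this
    norm_num
    rw [show (-(3249/2500) : ℝ) = -(3249/2500) from rfl, Real.exp_neg]
    rw [inv_le_comm₀ (Real.exp_pos _) (by norm_num)]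
    refine le_trans ?_ this
    norm_num
  have h2 : (phi (57/50) / W (57/50)) ^ 2 ≤ 2.7 := by
    rw [div_pow, div_le_iff₀ (by positivity)]
    have := W_lo
    nlinarith
  have h3 : Real.log (2 * W (57/50) / Real.sqrt (2 * Real.pi)) ≤ -1.35 := by
    have hs := sqrt_lo
    have : 2 * W (57/50) / Real.sqrt (2 * Real.pi) ≤ 0.2545 := by
      rw [div_le_iff₀ (by positivity)]
      have := W_hi
      nlinarith
    rw [Real.log_le_iff_le_exp (by positivity)]
    refine this.trans ?_
    rw [Real.exp_neg, le_inv_comm₀ (by norm_num) (Real.exp_pos _)]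
    have he : Real.exp 1.35 ^ 20 ≤ 3.92 ^ 20 := by
      rw [← Real.exp_nat_mul, show ((20:ℕ):ℝ) * 1.35 = (27:ℕ) * 1 by norm_num, Real.exp_nat_mul]
      calc _ ≤ (2.7182818286 : ℝ) ^ 27 := by
            gcongr; exact Real.exp_one_lt_d9.le
        _ ≤ _ := by norm_num
    have := le_of_pow_le_pow_left₀ (by norm_num) (by norm_num) he
    refine this.trans (by norm_num)
  unfold Dfun
  linarith

lemma exists_t (n : ℕ) (hn : 4 ≤ n) : ∃ t, 0 ≤ t ∧ 2 * n * W t = Real.sqrt (2 * Real.pi) ∧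
    2 * n * phi t / Real.sqrt (2 * Real.pi) ≤ Real.sqrt (2 * Real.log n) := by
  have hn' : (4:ℝ) ≤ n := by exact_mod_cast hn
  have hc : 0 < Real.sqrt (2 * Real.pi) := by positivity
  have hcont : Continuous W := continuous_iff_continuousAt.2 fun t => (W_deriv t).continuousAt
  have hlt : 0 < Real.sqrt (2 * Real.pi) / (2 * n) := by positivity
  obtain ⟨b, hb, hb2⟩ := ((W_tendsto.eventually_lt_const hlt).and
    (Filter.eventually_ge_atTop (57/50))).exists
  have hmem : Real.sqrt (2 * Real.pi) / (2 * n) ∈ Set.Icc (W b) (W (57/50)) := by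
    refine ⟨hb.le, ?_⟩
    rw [div_le_iff₀ (by positivity)]
    have := W_lo
    have := sqrt_hi
    nlinarith
  obtain ⟨t, ht, hWt⟩ := intermediate_value_Icc' hb2 hcont.continuousOn hmem
  have e : 2 * n * W t = Real.sqrt (2 * Real.pi) := by rw [hWt]; field_simp
  refine ⟨t, by linarith [ht.1], e, ?_⟩
  have hD := D_t0.trans (D_mono ht.1)
  have hW := W_pos t
  unfold Dfun at hD
  have e2 : 2 * W t / Real.sqrt (2 * Real.pi) = (n:ℝ)⁻¹ := by rw [← e]; field_simp
  rw [e2, Real.log_inv] at hD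
  apply Real.le_sqrt_of_sq_le
  have e3 : 2 * n * phi t / Real.sqrt (2 * Real.pi) = phi t / W t := by rw [← e]; field_simp
  rw [e3]; linarith

lemma int_pos_part (t : ℝ) (ht : 0 ≤ t) : ∫ x, max (|x| - t) 0 ∂(gaussianReal 0 1)
    = 2 * (phi t - t * W t) / Real.sqrt (2 * Real.pi) := by
  rw [integral_gaussianReal_eq_integral_smul (by norm_num)]
  have e : ∀ x : ℝ, gaussianPDFReal 0 1 x • max (|x| - t) 0
      = (fun y => (Real.sqrt (2 * Real.pi))⁻¹ * (max (y - t) 0 * phi y)) |x| := by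
    intro x
    simp only [gaussianPDFReal_def, smul_eq_mul, phi, sq_abs, NNReal.coe_one, mul_one, sub_zero]
    rw [neg_div]; ring
  simp_rw [e]
  rw [integral_comp_abs (f := fun y => (Real.sqrt (2 * Real.pi))⁻¹ * (max (y - t) 0 * phi y)),
    integral_const_mul]
  have e2 : ∫ x in Set.Ioi 0, max (x - t) 0 * phi x = ∫ x in Set.Ioi t, max (x - t) 0 * phi x := by
    apply setIntegral_eq_of_subset_of_forall_sdiff_eq_zero measurableSet_Ioi (Set.Ioi_subset_Ioi ht)
    intro x hx
    have : x ≤ t := by simpa using hx.2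
    rw [max_eq_right (by linarith), zero_mul]
  have e3 : ∫ x in Set.Ioi t, max (x - t) 0 * phi x = ∫ x in Set.Ioi t, (x * phi x - t * phi x) := by
    apply setIntegral_congr_fun measurableSet_Ioi
    intro x hx
    have : t < x := hx
    simp only
    rw [max_eq_left (by linarith)]; ring
  rw [e2, e3, integral_sub xphi_int.integrableOn (phi_int.const_mul t).integrableOn,
    integral_const_mul, int_xphi]
  change 2 * (_ * (phi t - t * W t)) = _
  field_simp

lemma abs_int (v : NNReal) : Integrable (fun x : ℝ => |x|) (gaussianReal 0 v) :=
  ((memLp_id_gaussianReal (μ := 0) (v := v) 1).integrable (by norm_num)).abs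

lemma pp_int (t : ℝ) : Integrable (fun x : ℝ => max (|x| - t) 0) (gaussianReal 0 1) :=
  ((abs_int 1).sub (integrable_const t)).pos_part

lemma int_abs : ∫ x, |x| ∂(gaussianReal 0 1) = 2 / Real.sqrt (2 * Real.pi) := by
  have := int_pos_part 0 le_rfl
  simpa [phi] using this

lemma int_abs2 : ∫ x, |x| ∂(gaussianReal 0 2) = 2 / Real.sqrt Real.pi := by
  have h := gaussianReal_map_const_mul (μ := 0) (v := 1) (Real.sqrt 2)
  have e : gaussianReal 0 2 = (gaussianReal 0 1).map (fun x => Real.sqrt 2 * x) := by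
    rw [h]
    congr 1
    · simp
    · ext; simp
  rw [e, integral_map (by fun_prop) (by fun_prop)]
  simp_rw [abs_mul]
  rw [integral_const_mul, int_abs, abs_of_nonneg (by positivity), Real.sqrt_mul (by norm_num)]
  field_simp

section
variable {n : ℕ}

local notation "γ" n => (Measure.pi fun _ : Fin n => gaussianReal 0 1)

lemma map_add_law (i j : Fin n) (hij : i ≠ j) :
    (γ n).map (fun g => g i + g j) = gaussianReal 0 2 := by
  have hi : iIndepFun (fun i (ω : Fin n → ℝ) => ω i) (γ n) :=
    iIndepFun_pi (X := fun _ x => x) (fun _ => aemeasurable_id)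
  have := gaussianReal_add_gaussianReal_of_indepFun (hi.indepFun hij)
    (measurePreserving_eval _ i).map_eq (measurePreserving_eval _ j).map_eq
  rw [add_zero, one_add_one_eq_two] at this
  exact this

lemma map_sub_law (i j : Fin n) (hij : i ≠ j) :
    (γ n).map (fun g => g i - g j) = gaussianReal 0 2 := by
  have hi : iIndepFun (fun i (ω : Fin n → ℝ) => ω i) (γ n) :=
    iIndepFun_pi (X := fun _ x => x) (fun _ => aemeasurable_id)
  have hn : (γ n).map (fun g => - g j) = gaussianReal 0 1 := by
    have h1 := (measurePreserving_eval (fun _ : Fin n => gaussianReal 0 1) j).map_eq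
    have h2 := gaussianReal_map_neg (μ := 0) (v := 1)
    rw [← h1, Measure.map_map (by fun_prop) (by fun_prop), neg_zero] at h2
    exact h2
  have := gaussianReal_add_gaussianReal_of_indepFun
    ((hi.indepFun hij).comp measurable_id measurable_neg)
    (measurePreserving_eval _ i).map_eq hn
  rw [add_zero, one_add_one_eq_two] at this
  rw [← this]
  rfl

lemma max_abs (a b : ℝ) : max |a| |b| = (|a + b| + |a - b|) / 2 := by
  rcases abs_cases a with ⟨h1, _⟩ | ⟨h1, _⟩ <;> rcases abs_cases b with ⟨h2, _⟩ | ⟨h2, _⟩ <;>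
  rcases abs_cases (a + b) with ⟨h3, _⟩ | ⟨h3, _⟩ <;>
  rcases abs_cases (a - b) with ⟨h4, _⟩ | ⟨h4, _⟩ <;>
  rw [h1, h2, h3, h4] <;>
  first
  | rw [max_eq_left (by linarith)]; linarith
  | rw [max_eq_right (by linarith)]; linarith

lemma int_of_law {X : (Fin n → ℝ) → ℝ} (hX : Measurable X) (h : (γ n).map X = gaussianReal 0 2) :
    Integrable (fun g => |X g|) (γ n) ∧ ∫ g, |X g| ∂(γ n) = 2 / Real.sqrt Real.pi := by
  constructor
  · have := abs_int 2
    rw [← h] at this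
    exact this.comp_measurable hX
  · rw [← int_abs2, ← h, integral_map hX.aemeasurable (by fun_prop)]

lemma pair_int (i j : Fin n) (hij : i ≠ j) :
    Integrable (fun g => max |g i| |g j|) (γ n) ∧
    ∫ g, max |g i| |g j| ∂(γ n) = 2 / Real.sqrt Real.pi := by
  obtain ⟨a1, a2⟩ := int_of_law (by fun_prop) (map_add_law i j hij)
  obtain ⟨b1, b2⟩ := int_of_law (by fun_prop) (map_sub_law i j hij)
  simp_rw [max_abs]
  refine ⟨(a1.add b1).div_const 2, ?_⟩
  rw [integral_div, integral_add a1 b1, a2, b2]; ring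

lemma single_int (i : Fin n) :
    Integrable (fun g => |g i|) (γ n) ∧ ∫ g, |g i| ∂(γ n) = 2 / Real.sqrt (2 * Real.pi) :=
  ⟨integrable_comp_eval (μ := fun _ : Fin n => gaussianReal 0 1) (f := fun x : ℝ => |x|) (abs_int 1),
   (integral_comp_eval (μ := fun _ : Fin n => gaussianReal 0 1) (f := fun x : ℝ => |x|)
    (by fun_prop)).trans int_abs⟩

lemma sup_nonneg (g : Fin n → ℝ) : 0 ≤ ⨆ j, |g j| := Real.iSup_nonneg fun _ => abs_nonneg _

lemma case_two : ∫ g : Fin 2 → ℝ, (⨆ j, |g j|) ∂(γ 2) ≤ Real.sqrt (2 * Real.log (2 : ℕ)) := by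
  obtain ⟨h1, h2⟩ := pair_int (n := 2) 0 1 (by decide)
  have : ∫ g : Fin 2 → ℝ, (⨆ j, |g j|) ∂(γ 2) ≤ ∫ g, max |g 0| |g 1| ∂(γ 2) := by
    apply integral_mono_of_nonneg (Filter.Eventually.of_forall sup_nonneg) h1
    refine Filter.Eventually.of_forall fun g => ciSup_le fun j => ?_
    fin_cases j <;> simp
  refine this.trans ?_
  rw [h2]
  apply Real.le_sqrt_of_sq_le
  rw [div_pow, Real.sq_sqrt Real.pi_pos.le, div_le_iff₀ Real.pi_pos]
  have := Real.log_two_gt_d9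
  have := Real.pi_gt_three
  push_cast
  norm_num at *
  nlinarith

lemma case_three : ∫ g : Fin 3 → ℝ, (⨆ j, |g j|) ∂(γ 3) ≤ Real.sqrt (2 * Real.log (3 : ℕ)) := by
  obtain ⟨a1, a2⟩ := pair_int (n := 3) 0 1 (by decide)
  obtain ⟨b1, b2⟩ := pair_int (n := 3) 0 2 (by decide)
  obtain ⟨c1, c2⟩ := pair_int (n := 3) 1 2 (by decide)
  obtain ⟨d1, d2⟩ := single_int (n := 3) 0
  obtain ⟨e1, e2⟩ := single_int (n := 3) 1
  obtain ⟨f1, f2⟩ := single_int (n := 3) 2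
  have s1 : Integrable (fun g : Fin 3 → ℝ => max |g 0| |g 1| + max |g 0| |g 2| + max |g 1| |g 2|)
    (γ 3) := (a1.add b1).add c1
  have s2 : Integrable (fun g : Fin 3 → ℝ => (|g 0| + |g 1| + |g 2|) / 2) (γ 3) :=
    ((d1.add e1).add f1).div_const 2
  have : ∫ g : Fin 3 → ℝ, (⨆ j, |g j|) ∂(γ 3) ≤
      ∫ g, (2 / 3) * ((max |g 0| |g 1| + max |g 0| |g 2| + max |g 1| |g 2|)
        - (|g 0| + |g 1| + |g 2|) / 2) ∂(γ 3) := by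
    apply integral_mono_of_nonneg (Filter.Eventually.of_forall sup_nonneg) ((s1.sub s2).const_mul _)
    refine Filter.Eventually.of_forall fun g => ciSup_le fun j => ?_
    have := le_max_left |g 0| |g 1|
    have := le_max_left |g 0| |g 2|
    have := le_max_left |g 1| |g 2|
    have := le_max_right |g 0| |g 1|
    have := le_max_right |g 0| |g 2|
    have := le_max_right |g 1| |g 2|
    fin_cases j <;> simp <;> linarith
  refine this.trans ?_
  rw [integral_const_mul, integral_sub s1 s2, integral_div]
  have i1 : ∫ g, (max |g 0| |g 1| + max |g 0| |g 2| + max |g 1| |g 2|) ∂(γ 3)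
    = 3 * (2 / Real.sqrt Real.pi) := by
    rw [integral_add (by exact a1.add b1) c1, integral_add a1 b1, a2, b2, c2]; ring
  have i2 : ∫ g, (|g 0| + |g 1| + |g 2|) ∂(γ 3) = 3 * (2 / Real.sqrt (2 * Real.pi)) := by
    rw [integral_add (by exact d1.add e1) f1, integral_add d1 e1, d2, e2, f2]; ring
  rw [i1, i2]
  have hp : 1.7724 ≤ Real.sqrt Real.pi :=
    Real.le_sqrt_of_sq_le (by have := Real.pi_gt_d6; norm_num at *; linarith)
  have h1 : 2 / Real.sqrt Real.pi ≤ 1.1285 := by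
    rw [div_le_iff₀ (by positivity)]; norm_num at *; linarith
  have h2 : 0.7978 ≤ 2 / Real.sqrt (2 * Real.pi) := by
    have := sqrt_hi
    rw [le_div_iff₀ (by positivity)]
    linarith
  have h3 : 1.46 ≤ Real.sqrt (2 * Real.log (3:ℕ)) := by
    apply Real.le_sqrt_of_sq_le
    have : 1.07 ≤ Real.log 3 := by
      rw [Real.le_log_iff_exp_le (by norm_num)]
      have he : Real.exp 1.07 ^ 100 ≤ 3 ^ 100 := by
        rw [← Real.exp_nat_mul, show ((100:ℕ):ℝ) * 1.07 = (107:ℕ) * 1 by norm_num,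
          Real.exp_nat_mul]
        calc _ ≤ (2.7182818286 : ℝ) ^ 107 := by
              gcongr; exact Real.exp_one_lt_d9.le
          _ ≤ _ := by norm_num
      exact le_of_pow_le_pow_left₀ (by norm_num) (by norm_num) he
    norm_num at *
    linarith
  refine le_trans ?_ h3
  norm_num at h1 h2 ⊢
  linarith

lemma case_ge_four (hn : 4 ≤ n) :
    ∫ g : Fin n → ℝ, (⨆ j, |g j|) ∂(γ n) ≤ Real.sqrt (2 * Real.log n) := by
  obtain ⟨t, ht, hW, hb⟩ := exists_t n hn
  have hc : 0 < Real.sqrt (2 * Real.pi) := by positivity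
  have hi : ∀ j : Fin n, Integrable (fun g : Fin n → ℝ => max (|g j| - t) 0) (γ n) := fun j =>
    integrable_comp_eval (μ := fun _ : Fin n => gaussianReal 0 1)
      (f := fun x : ℝ => max (|x| - t) 0) (pp_int t)
  have hs : Integrable (fun g : Fin n → ℝ => ∑ j, max (|g j| - t) 0) (γ n) :=
    integrable_finsetSum _ fun j _ => hi j
  have : Nonempty (Fin n) := ⟨⟨0, by omega⟩⟩
  have h1 : ∫ g : Fin n → ℝ, (⨆ j, |g j|) ∂(γ n) ≤
      ∫ g : Fin n → ℝ, (t + ∑ j, max (|g j| - t) 0) ∂(γ n) := by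
    apply integral_mono_of_nonneg (Filter.Eventually.of_forall sup_nonneg)
      ((integrable_const t).add hs)
    refine Filter.Eventually.of_forall fun g => ciSup_le fun j => ?_
    have h := Finset.single_le_sum (f := fun j => max (|g j| - t) 0)
      (fun i _ => le_max_right _ _) (Finset.mem_univ j)
    have := le_max_left (|g j| - t) 0
    change |g j| ≤ t + ∑ x, max (|g x| - t) 0
    linarith
  have h2 : ∀ j : Fin n, ∫ g : Fin n → ℝ, max (|g j| - t) 0 ∂(γ n)
      = 2 * (phi t - t * W t) / Real.sqrt (2 * Real.pi) := fun j =>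
    (integral_comp_eval (μ := fun _ : Fin n => gaussianReal 0 1)
      (f := fun x : ℝ => max (|x| - t) 0) (pp_int t).aestronglyMeasurable).trans (int_pos_part t ht)
  rw [integral_add (integrable_const t) hs, integral_finsetSum _ (fun j _ => hi j)] at h1
  simp only [h2] at h1
  simp only [integral_const, probReal_univ, Finset.sum_const, Finset.card_univ, Fintype.card_fin,
    smul_eq_mul, nsmul_eq_mul, one_mul] at h1
  refine h1.trans (le_trans (le_of_eq ?_) hb)
  have : t = t * (2 * n * W t) / Real.sqrt (2 * Real.pi) := by rw [hW]; field_simp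
  nth_rewrite 1 [this]
  field_simp
  ring

end

/-- The expected maximum absolute coordinate of an `n`-dimensional standard Gaussian
vector is at most `√(2 log n)`, for `n ≥ 2`. -/
theorem expected_max_abs_gaussian_le (n : ℕ) (hn : 2 ≤ n) :
    ∫ g : Fin n → ℝ, (⨆ j, |g j|)
        ∂(Measure.pi fun _ : Fin n => gaussianReal 0 1)
      ≤ Real.sqrt (2 * Real.log n) := by
  rcases Nat.lt_or_ge n 4 with h | h
  · interval_cases n
    · exact case_two
    · exact case_three
  · exact case_ge_four h
end

section
/- Let n ≥ 1, m ≥ 1, and ε, κ, λ > 0. Let f : ℝⁿ → ℝ and g₁, …, g_m : ℝⁿ → ℝ satisfy the Lipschitz conditions |f(x) − f(y)| ≤ κ‖x − y‖_∞ and |gᵢ(x) − gᵢ(y)| ≤ κ‖x − y‖_∞ for all x, y ∈ ℝⁿ and all i. Suppose x* minimizes f over the feasible set {x ∈ ℝⁿ : gᵢ(x) ≤ 0 for all i, ‖x‖₁ ≤ λ}. Then there exists z ∈ ℤⁿ such that the point x̂ = (ε/κ)·z satisfies ‖x̂‖₁ ≤ λ, f(x̂) ≤ f(x*) + ε, and gᵢ(x̂)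 ≤ ε for all i ∈ {1, …, m}. -/
theorem round_toward_zero (d x : ℝ) (hd : 0 < d) :
    ∃ z : ℤ, |d * (z : ℝ)| ≤ |x| ∧ |d * (z : ℝ) - x| ≤ d := by
  have key : ∀ y : ℝ, 0 ≤ y → ∃ z : ℤ, |d * (z : ℝ)| ≤ |y| ∧ |d * (z : ℝ) - y| ≤ d := by
    intro y hy
    have h0 : (0 : ℝ) ≤ (⌊y / d⌋ : ℤ) := by
      exact_mod_cast Int.floor_nonneg.mpr (div_nonneg hy hd.le)
    have h1 := Int.floor_le (y / d)
    have h2 := Int.lt_floor_add_one (y / d)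
    rw [le_div_iff₀ hd] at h1
    rw [div_lt_iff₀ hd] at h2
    refine ⟨⌊y / d⌋, ?_, ?_⟩
    · rw [abs_of_nonneg (mul_nonneg hd.le h0), abs_of_nonneg hy]
      linarith
    · rw [abs_le]
      constructor <;> linarith
  rcases le_total 0 x with hx | hx
  · exact key x hx
  · obtain ⟨z, h1, h2⟩ := key (-x) (by linarith)
    refine ⟨-z, ?_, ?_⟩
    · rw [abs_neg] at h1
      push_cast
      rwa [mul_neg, abs_neg]
    · push_cast
      rw [← abs_neg]
      convert h2 using 2
      ring

/-- Additive PTAS guarantee: if `f` and the constraints `g i` are `κ`-Lipschitz with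
respect to the ℓ∞-norm and `x*` minimizes `f` over `{x : g(x) ≤ 0, ‖x‖₁ ≤ λ}`, then
some scaled grid point `x̂ = (ε/κ)z`, `z ∈ ℤⁿ`, satisfies `‖x̂‖₁ ≤ λ`,
`f(x̂) ≤ f(x*) + ε`, and `g i (x̂) ≤ ε` for all `i`. -/
theorem ptas_lipschitz_l1_ball (n m : ℕ) (hn : 1 ≤ n) (hm : 1 ≤ m)
    (ε κ lam : ℝ) (hε : 0 < ε) (hκ : 0 < κ) (hlam : 0 < lam)
    (f : (Fin n → ℝ) → ℝ) (g : Fin m → (Fin n → ℝ) → ℝ)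
    (hf : ∀ x y : Fin n → ℝ, |f x - f y| ≤ κ * ⨆ i, |x i - y i|)
    (hg : ∀ j, ∀ x y : Fin n → ℝ, |g j x - g j y| ≤ κ * ⨆ i, |x i - y i|)
    (xstar : Fin n → ℝ)
    (hg_star : ∀ j, g j xstar ≤ 0) (hl1_star : ∑ i, |xstar i| ≤ lam)
    (hopt : ∀ x : Fin n → ℝ, (∀ j, g j x ≤ 0) → (∑ i, |x i| ≤ lam) → f xstar ≤ f x) :
    ∃ z : Fin n → ℤ,
      (∑ i, |ε / κ * (z i : ℝ)|) ≤ lam ∧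
      f (fun i => ε / κ * (z i : ℝ)) ≤ f xstar + ε ∧
      (∀ j, g j (fun i => ε / κ * (z i : ℝ)) ≤ ε) := by
  choose z hz1 hz2 using fun i => round_toward_zero (ε / κ) (xstar i) (div_pos hε hκ)
  haveI : Nonempty (Fin n) := ⟨⟨0, hn⟩⟩
  have hs : κ * (⨆ i, |(fun i => ε / κ * (z i : ℝ)) i - xstar i|) ≤ ε := by
    have h : (⨆ i, |(fun i => ε / κ * (z i : ℝ)) i - xstar i|) ≤ ε / κ := ciSup_le hz2
    calc _ ≤ κ * (ε / κ) := mul_le_mul_of_nonneg_left h hκ.le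
      _ = ε := mul_div_cancel₀ ε hκ.ne'
  refine ⟨z, (Finset.sum_le_sum fun i _ => hz1 i).trans hl1_star, ?_, fun j => ?_⟩
  · have := (le_abs_self _).trans ((hf _ xstar).trans hs)
    linarith
  · have := (le_abs_self _).trans ((hg j _ xstar).trans hs)
    linarith [hg_star j]
end
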